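/- For 0 ≤ k ≤ n and 0 ≤ r < n, |S̄_r(n,k)| = |N_r(n,k)| if and only if at least one of the following holds: (a) n is odd; (b) k is odd; (c) ν₂(n) < ν₂(k) (including k = 0); (d) ν₂(k) − ν₂(r) ≥ 2; (e) k = n is even and r ∉ {0, n/2}. -/

import Mathlib

open Finset

/-- Number of ones in a cyclic binary word of length `n`. -/
noncomputable def onesCount (n : ℕ) (w : ZMod n → Bool) : ℕ :=
  Nat.card {i : ZMod n // w i = true}

/-- The co-period of a cyclic binary word `w` of length `n`: the size of its
stabilizer under cyclic rotation (equivalently, the `j` such that `w = v^j`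
with `v` primitive). -/
noncomputable def coPeriod (n : ℕ) (w : ZMod n → Bool) : ℕ :=
  Nat.card {t : ZMod n // ∀ i, w (i + t) = w i}

/-- Two cyclic words are related iff they are cyclic rotations of each other. -/
def rotRel (n : ℕ) (u v : ZMod n → Bool) : Prop :=
  ∃ t : ZMod n, ∀ i, u i = v (i + t)

theorem rotRel_equivalence (n : ℕ) : Equivalence (rotRel n) := by
  constructor
  · exact fun u => ⟨0, fun i => by rw [add_zero]⟩
  · rintro u v ⟨t, h⟩
    exact ⟨-t, fun i => by rw [h, neg_add_cancel_right]⟩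
  · rintro u v w ⟨t1, h1⟩ ⟨t2, h2⟩
    exact ⟨t1 + t2, fun i => by rw [h1, h2, ← add_assoc]⟩

def rotSetoid (n : ℕ) : Setoid (ZMod n → Bool) := ⟨rotRel n, rotRel_equivalence n⟩

/-- The number of binary necklaces of length `n` with `k` ones. -/
noncomputable def NCard (n k : ℕ) : ℕ :=
  Nat.card (Quotient (Setoid.comap
    (Subtype.val : {w : ZMod n → Bool // onesCount n w = k} → _) (rotSetoid n)))

/-- The number of binary necklaces of length `n` with `k` ones whose co-period divides `r`. -/
noncomputable def NrCard (n k r : ℕ) : ℕ :=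
  Nat.card (Quotient (Setoid.comap
    (Subtype.val : {w : ZMod n → Bool // onesCount n w = k ∧ coPeriod n w ∣ r} → _)
    (rotSetoid n)))

/-- The number of `k`-element subsets of `{1,…,n}` whose elements sum to `r` mod `n`. -/
def SbarCard (n k r : ℕ) : ℕ :=
  ((Finset.Icc 1 n).powerset.filter
    (fun A => A.card = k ∧ (∑ a ∈ A, a) % n = r)).card

/-- The number of `k`-element subsets of `{1,…,n-1}` whose elements sum to `r` mod `n`. -/
def SCard (n k r : ℕ) : ℕ :=
  ((Finset.Icc 1 (n - 1)).powerset.filter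
    (fun A => A.card = k ∧ (∑ a ∈ A, a) % n = r)).card

/-- The Ramanujan sum `c_d(r) = ∑_{j ∣ gcd(r,d)} j · μ(d/j)`. -/
def ramanujanSum (d : ℕ) (r : ℤ) : ℤ :=
  ∑ j ∈ (Int.gcd r d).divisors, (j : ℤ) * ArithmeticFunction.moebius (d / j)


section polyPart
open Polynomial

lemma aux_prod_range_d (d : ℕ) (hd : 0 < d) (ζ : ℂ) (hζ : IsPrimitiveRoot ζ d) :
    ∏ i ∈ Finset.range d, (1 + C (ζ ^ (i + 1)) * X : ℂ[X]) = 1 - (-X) ^ d := by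
  have hC : IsPrimitiveRoot (C ζ : ℂ[X]) d := hζ.map_of_injective (f := (C : ℂ →+* ℂ[X])) C_injective
  have h := hC.pow_sub_pow_eq_prod_sub_mul (1 : ℂ[X]) (-X) hd
  have himg : Polynomial.nthRootsFinset d (1 : ℂ[X])
      = (Finset.range d).image (fun i => (C ζ : ℂ[X]) ^ (i + 1)) := by
    symm
    apply Finset.eq_of_subset_of_card_le
    · intro x hx
      obtain ⟨i, _, rfl⟩ := Finset.mem_image.1 hx
      rw [Polynomial.mem_nthRootsFinset hd, ← pow_mul, mul_comm, pow_mul, hC.pow_eq_one, one_pow]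
    · rw [hC.card_nthRootsFinset, Finset.card_image_of_injOn, Finset.card_range]
      intro i hi j hj hij
      simp only [Finset.coe_range, Set.mem_Iio] at hi hj
      simp only [pow_succ] at hij
      have := mul_right_cancel₀ (hC.ne_zero hd.ne') hij
      exact hC.pow_inj hi hj this
  rw [one_pow] at h
  rw [h, himg, Finset.prod_image]
  · apply Finset.prod_congr rfl
    intro i _
    simp
  · intro i hi j hj hij
    simp only [Finset.coe_range, Set.mem_Iio] at hi hj
    simp only [pow_succ] at hij
    have := mul_right_cancel₀ (hC.ne_zero hd.ne') hij
    exact hC.pow_inj hi hj this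

lemma aux_prod_range_mul (d : ℕ) (hd : 0 < d) (ζ : ℂ) (hζ : IsPrimitiveRoot ζ d) (q : ℕ) :
    ∏ i ∈ Finset.range (d * q), (1 + C (ζ ^ (i + 1)) * X : ℂ[X]) = (1 - (-X) ^ d) ^ q := by
  induction q with
  | zero => simp
  | succ q ih =>
    rw [mul_add, mul_one, Finset.prod_range_add, ih, pow_succ, ← aux_prod_range_d d hd ζ hζ]
    congr 1
    apply Finset.prod_congr rfl
    intro i _
    rw [add_assoc, pow_add ζ (d * q), pow_mul, hζ.pow_eq_one, one_pow, one_mul]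

lemma aux_coeff (d : ℕ) (hd : 0 < d) (q k : ℕ) :
    ((1 - (-X) ^ d : ℂ[X]) ^ q).coeff k =
      if d ∣ k then (-1) ^ (k + k / d) * (q.choose (k / d) : ℂ) else 0 := by
  have h : ((1 - (-X) ^ d : ℂ[X]) ^ q) =
      expand ℂ d (((1 + X) ^ q).comp (C (-(-1) ^ d) * X)) := by
    simp only [pow_comp, add_comp, one_comp, X_comp, map_pow, map_add, map_one, map_mul,
      expand_C, expand_X]
    congr 1
    rw [neg_pow (X : ℂ[X]) d]
    simp
    ring
  rw [h, coeff_expand hd]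
  split_ifs with hdk
  · obtain ⟨m, rfl⟩ := hdk
    rw [comp_C_mul_X_coeff, coeff_one_add_X_pow, Nat.mul_div_cancel_left _ hd, mul_comm]
    congr 1
    rw [neg_pow, ← pow_mul, ← pow_add, add_comm]
  · rfl

lemma aux_esymm (n k : ℕ) (ζ : ℂ) :
    (∏ i ∈ Finset.range n, (1 + C (ζ ^ (i + 1)) * X : ℂ[X])).coeff k =
      ∑ A ∈ (Finset.Icc 1 n).powerset.filter (fun A => A.card = k), ζ ^ (∑ a ∈ A, a) := by
  have h1 : ∏ i ∈ Finset.range n, (1 + C (ζ ^ (i + 1)) * X : ℂ[X])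
      = ∏ j ∈ Finset.Icc 1 n, (1 + C (ζ ^ j) * X : ℂ[X]) := by
    rw [Finset.range_eq_Ico, Finset.prod_Ico_add' (fun j => (1 + C (ζ ^ j) * X : ℂ[X])) 0 n 1]
    rfl
  rw [h1, Finset.prod_one_add, finsetSum_coeff, Finset.sum_filter]
  apply Finset.sum_congr rfl
  intro A _
  rw [Finset.prod_mul_distrib, Finset.prod_const, ← map_prod, Finset.prod_pow_eq_pow_sum,
    coeff_C_mul_X_pow]
  simp only [eq_comm]

end polyPart

lemma aux_subgroup_sum (n : ℕ) [NeZero n] (r : ℕ) (K : AddSubgroup (ZMod n)) [DecidablePred (· ∈ K)]: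
    ∑ t ∈ univ.filter (fun t : ZMod n => t ∈ K), ZMod.stdAddChar (-(t * (r : ZMod n))) =
      if Nat.card K ∣ r then (Nat.card K : ℂ) else 0 := by
  let ψ : AddChar K ℂ := 
    { toFun := fun t => ZMod.stdAddChar (-((t : ZMod n) * (r : ZMod n)))
      map_zero_eq_one' := by simp
      map_add_eq_mul' := fun a b => by
        rw [← AddChar.map_add_eq_mul]; congr 1; push_cast; ring }
  have h := AddChar.sum_eq_ite ψ
  have h2 : ∑ t ∈ univ.filter (fun t : ZMod n => t ∈ K), ZMod.stdAddChar (-(t * (r : ZMod n))) 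
     = ∑ a, ψ a := by
    rw [Finset.sum_subtype (p := fun t => t ∈ K)]
    · rfl
    · simp
  rw [h2, h, Nat.card_eq_fintype_card]
  congr 1
  rw [eq_iff_iff, ← Nat.card_eq_fintype_card]
  constructor
  · intro h0
    obtain ⟨g, hg⟩ := IsAddCyclic.exists_generator (α := K)
    rw [← addOrderOf_eq_card_of_forall_mem_zmultiples hg, addOrderOf_dvd_iff_nsmul_eq_zero]
    have h1 : ψ g = 1 := by rw [h0]; rfl
    have h3 : -((g : ZMod n) * (r : ZMod n)) = 0 := by
      apply ZMod.injective_stdAddChar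
      rw [AddChar.map_zero_eq_one]; exact h1
    ext
    push_cast
    rw [nsmul_eq_mul, mul_comm]
    simpa using h3
  · rintro ⟨c, hc⟩
    ext t
    have : (r : ℕ) • t = 0 := by
      rw [hc, mul_comm, mul_nsmul', card_nsmul_eq_zero', nsmul_zero]
    have h3 : -((t : ZMod n) * (r : ZMod n)) = 0 := by
      have := congrArg (Subtype.val) this
      push_cast at this
      rw [nsmul_eq_mul, mul_comm] at this
      rw [this, neg_zero]
    change ZMod.stdAddChar (-((t : ZMod n) * (r : ZMod n))) = 1
    rw [h3, AddChar.map_zero_eq_one]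

/-- The stabilizer of a cyclic word, as a subgroup. -/
def wStab (n : ℕ) (w : ZMod n → Bool) : AddSubgroup (ZMod n) where
  carrier := {t | ∀ i, w (i + t) = w i}
  zero_mem' := fun i => by rw [add_zero]
  add_mem' := fun {a b} ha hb i => by rw [← add_assoc, hb, ha]
  neg_mem' := fun {a} ha i => by
    have := ha (i + -a)
    rw [neg_add_cancel_right] at this
    exact this.symm

lemma mem_wStab (n : ℕ) (w : ZMod n → Bool) (t : ZMod n) :
    t ∈ wStab n w ↔ ∀ i, w (i + t) = w i := Iff.rfl

lemma coPeriod_eq (n : ℕ) (w : ZMod n → Bool) : coPeriod n w = Nat.card (wStab n w) := rfl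

lemma aux_card_preimage (n : ℕ) [NeZero n] (H : AddSubgroup (ZMod n)) (B : Set (ZMod n ⧸ H))
    (w : ZMod n → Bool) (hw : ∀ i, w i = true ↔ (i : ZMod n ⧸ H) ∈ B) :
    onesCount n w = Nat.card H * Nat.card B := by
  have e := QuotientAddGroup.preimageMkEquivAddSubgroupProdSet H B
  rw [← Nat.card_prod, ← Nat.card_congr e]
  unfold onesCount
  apply Nat.card_congr
  exact Equiv.subtypeEquivRight hw

lemma aux_exists_B (n : ℕ) (H : AddSubgroup (ZMod n)) 
    (w : ZMod n → Bool) (hH : H ≤ wStab n w) :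
    ∀ i, w i = true ↔ (i : ZMod n ⧸ H) ∈ ((fun i : ZMod n => (i : ZMod n ⧸ H)) '' {i | w i = true}) := by
  intro i
  constructor
  · intro h
    exact ⟨i, h, rfl⟩
  · rintro ⟨j, hj, hij⟩
    have h1 : -j + i ∈ H := QuotientAddGroup.eq.1 hij
    have := hH h1 j
    rw [add_neg_cancel_left] at this
    rw [this]; exact hj

lemma coPeriod_dvd_ones (n : ℕ) [NeZero n] (w : ZMod n → Bool) : coPeriod n w ∣ onesCount n w := by
  rw [aux_card_preimage n (wStab n w) _ w (aux_exists_B n _ w le_rfl), coPeriod_eq]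
  exact dvd_mul_right _ _

lemma aux_fix (n : ℕ) [NeZero n] (k : ℕ) (t : ZMod n) :
    Nat.card {w : ZMod n → Bool // onesCount n w = k ∧ t ∈ wStab n w} =
      if addOrderOf t ∣ k then (n / addOrderOf t).choose (k / addOrderOf t) else 0 := by
  classical
  have hd : 0 < addOrderOf t := addOrderOf_pos t
  set H := AddSubgroup.zmultiples t with hHdef
  have hcard : Nat.card H = addOrderOf t := Nat.card_zmultiples t
  have hle : ∀ w : ZMod n → Bool, t ∈ wStab n w → H ≤ wStab n w := by
    intro w hw
    exact (AddSubgroup.zmultiples_le_of_mem hw)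
  split_ifs with hdk
  · have hq : Nat.card (ZMod n ⧸ H) = n / addOrderOf t := by
      have h := AddSubgroup.card_eq_card_quotient_mul_card_addSubgroup H
      rw [hcard, Nat.card_zmod] at h
      exact (Nat.div_eq_of_eq_mul_left hd h).symm
    have : Fintype (ZMod n ⧸ H) := Fintype.ofFinite _
    have hc : (n / addOrderOf t).choose (k / addOrderOf t) = 
        Nat.card {B : Finset (ZMod n ⧸ H) // B.card = k / addOrderOf t} := by
      rw [← hq, Nat.card_eq_fintype_card, Nat.card_eq_fintype_card, Fintype.card_finset_len]
    rw [hc]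
    symm
    apply Nat.card_congr
    have hone : ∀ B : Finset (ZMod n ⧸ H), 
        onesCount n (fun i => decide ((i : ZMod n ⧸ H) ∈ B)) = addOrderOf t * B.card := by
      intro B
      rw [aux_card_preimage n H (B : Set (ZMod n ⧸ H)) _ (by simp), hcard]
      simp
    refine Equiv.ofBijective (fun B => ⟨fun i => decide ((i : ZMod n ⧸ H) ∈ B.1), ?_, ?_⟩) ⟨?_, ?_⟩
    · rw [hone, B.2, Nat.mul_div_cancel' hdk]
    · intro i
      have : ((i + t : ZMod n) : ZMod n ⧸ H) = (i : ZMod n ⧸ H) := by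
        rw [eq_comm, QuotientAddGroup.eq, neg_add_cancel_left]
        exact AddSubgroup.mem_zmultiples t
      simp only [this]
    · rintro ⟨B, hB⟩ ⟨B', hB'⟩ h
      simp only [Subtype.mk.injEq] at h ⊢
      ext x
      obtain ⟨i, rfl⟩ := QuotientAddGroup.mk_surjective x
      have := congrFun h i
      simpa using this
    · rintro ⟨w, hw, ht⟩
      have hB := aux_exists_B n H w (hle w ht)
      set B := ((fun i : ZMod n => (i : ZMod n ⧸ H)) '' {i | w i = true})
      have hwe : (fun i : ZMod n => decide ((i : ZMod n ⧸ H) ∈ B.toFinset)) = w := by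
        ext i
        rw [Bool.eq_iff_iff, hB i]
        simp
      refine ⟨⟨B.toFinset, ?_⟩, ?_⟩
      · have := hone B.toFinset
        rw [hwe, hw] at this
        rw [this, Nat.mul_div_cancel_left _ hd]
      · simp only [Subtype.mk.injEq]
        exact hwe
  · rw [Nat.card_eq_zero]
    left
    constructor
    rintro ⟨w, hw, ht⟩
    apply hdk
    rw [← hw, aux_card_preimage n H _ w (aux_exists_B n H w (hle w ht)), hcard]
    exact dvd_mul_right _ _

lemma aux_E (n : ℕ) [NeZero n] (k : ℕ) (t : ZMod n) :
    ∑ A ∈ (Finset.Icc 1 n).powerset.filter (fun A => A.card = k),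
        (ZMod.stdAddChar t : ℂ) ^ (∑ a ∈ A, a) =
      (-1) ^ (k + k / addOrderOf t) *
        (Nat.card {w : ZMod n → Bool // onesCount n w = k ∧ t ∈ wStab n w} : ℂ) := by
  have hd : 0 < addOrderOf t := addOrderOf_pos t
  have hζ : IsPrimitiveRoot (ZMod.stdAddChar t : ℂ) (addOrderOf t) := by
    rw [IsPrimitiveRoot.iff_def]
    constructor
    · rw [← AddChar.map_nsmul_eq_pow, addOrderOf_nsmul_eq_zero, AddChar.map_zero_eq_one]
    · intro l hl
      rw [← AddChar.map_nsmul_eq_pow, ← AddChar.map_zero_eq_one (ZMod.stdAddChar (N := n))] at hl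
      exact addOrderOf_dvd_of_nsmul_eq_zero (ZMod.injective_stdAddChar hl)
  have hdn : addOrderOf t ∣ n := by
    have := addOrderOf_dvd_natCard t
    rwa [Nat.card_zmod] at this
  rw [← aux_esymm, aux_fix]
  have hp := aux_prod_range_mul _ hd _ hζ (n / addOrderOf t)
  rw [Nat.mul_div_cancel' hdn] at hp
  rw [hp, aux_coeff _ hd]
  split_ifs <;> simp

lemma aux_S (n : ℕ) [NeZero n] (k r : ℕ) (hr : r < n) :
    (n : ℂ) * SbarCard n k r = ∑ t : ZMod n, ZMod.stdAddChar (-(t * (r : ZMod n))) *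
      ∑ A ∈ (Finset.Icc 1 n).powerset.filter (fun A => A.card = k),
        (ZMod.stdAddChar t : ℂ) ^ (∑ a ∈ A, a) := by
  simp_rw [Finset.mul_sum]
  rw [Finset.sum_comm]
  unfold SbarCard
  rw [← Finset.filter_filter, Finset.card_filter, Nat.cast_sum, Finset.mul_sum]
  apply Finset.sum_congr rfl
  intro A _
  have h := AddChar.sum_mulShift (((∑ a ∈ A, a : ℕ) : ZMod n) - (r : ZMod n))
    (ZMod.isPrimitive_stdAddChar n)
  have h2 : ∀ t : ZMod n, ZMod.stdAddChar (-(t * (r : ZMod n))) *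
      (ZMod.stdAddChar t : ℂ) ^ (∑ a ∈ A, a) = 
      ZMod.stdAddChar (t * (((∑ a ∈ A, a : ℕ) : ZMod n) - (r : ZMod n))) := by
    intro t
    rw [← AddChar.map_nsmul_eq_pow, ← AddChar.map_add_eq_mul, nsmul_eq_mul]
    congr 1
    ring
  simp_rw [h2]
  rw [h]
  have h3 : ((∑ a ∈ A, a : ℕ) : ZMod n) - (r : ZMod n) = 0 ↔ (∑ a ∈ A, a) % n = r := by
    rw [sub_eq_zero, ZMod.natCast_eq_natCast_iff, Nat.ModEq, Nat.mod_eq_of_lt hr]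
  simp only [h3, ZMod.card]
  split_ifs <;> simp

lemma onesCount_rot (n : ℕ) (w : ZMod n → Bool) (t : ZMod n) :
    onesCount n (fun i => w (i + t)) = onesCount n w := by
  unfold onesCount
  exact Nat.card_congr ((Equiv.addRight t).subtypeEquiv (fun i => Iff.rfl))

lemma wStab_rot (n : ℕ) (w : ZMod n → Bool) (t : ZMod n) :
    wStab n (fun i => w (i + t)) = wStab n w := by
  ext s
  simp only [mem_wStab]
  constructor
  · intro h i
    have := h (i - t)
    rwa [add_right_comm, sub_add_cancel] at this
  · intro h i
    rw [add_right_comm]; exact h _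

/-- Words counted by `NrCard`. -/
def WSub (n k r : ℕ) : Type := {w : ZMod n → Bool // onesCount n w = k ∧ coPeriod n w ∣ r}

instance (n k r : ℕ) : AddAction (ZMod n) (WSub n k r) where
  vadd t w := ⟨fun i => w.1 (i + t), by rw [onesCount_rot]; exact w.2.1,
    by rw [coPeriod_eq, wStab_rot]; exact w.2.2⟩
  zero_vadd w := Subtype.ext (funext fun i => congrArg w.1 (add_zero i))
  add_vadd s t w := Subtype.ext (funext fun i => congrArg w.1 (by
    change i + (s + t) = (i + s) + t
    rw [add_assoc]))

lemma WSub_vadd (n k r : ℕ) (t : ZMod n) (w : WSub n k r) (i : ZMod n) :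
    (t +ᵥ w).1 i = w.1 (i + t) := rfl

instance (n k r : ℕ) [NeZero n] : Finite (WSub n k r) := by unfold WSub; infer_instance

lemma aux_burnside (n k r : ℕ) [NeZero n] [Fintype {w : ZMod n → Bool // onesCount n w = k ∧ coPeriod n w ∣ r}]:
    NrCard n k r * n = ∑ w : {w : ZMod n → Bool // onesCount n w = k ∧ coPeriod n w ∣ r},
      coPeriod n w.1 := by
  classical
  have e := AddAction.sigmaFixedByEquivOrbitsProdAddGroup (ZMod n) (WSub n k r)
  have h1 : NrCard n k r = Nat.card (Quotient (AddAction.orbitRel (ZMod n) (WSub n k r))) := by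
    unfold NrCard
    apply Nat.card_congr
    refine Quotient.congr (Equiv.refl _) ?_
    intro a b
    rw [AddAction.orbitRel_apply, AddAction.mem_orbit_iff]
    constructor
    · rintro ⟨t, ht⟩
      exact ⟨t, Subtype.ext (funext fun i => (ht i).symm)⟩
    · rintro ⟨t, ht⟩
      exact ⟨t, fun i => (congrFun (congrArg Subtype.val ht) i).symm⟩
  have h2 : NrCard n k r * n = Nat.card (Σ g : ZMod n, AddAction.fixedBy (WSub n k r) g) := by
    rw [Nat.card_congr e, Nat.card_prod, h1, Nat.card_zmod]
  rw [h2]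
  have e2 : (Σ g : ZMod n, AddAction.fixedBy (WSub n k r) g) ≃ 
     Σ w : {w : ZMod n → Bool // onesCount n w = k ∧ coPeriod n w ∣ r}, wStab n w.1 :=
    { toFun := fun x => ⟨x.2.1, ⟨x.1, fun i => congrFun (congrArg Subtype.val x.2.2) i⟩⟩
      invFun := fun x => ⟨x.2.1, ⟨x.1, Subtype.ext (funext fun i => x.2.2 i)⟩⟩
      left_inv := fun x => rfl
      right_inv := fun x => rfl }
  rw [Nat.card_congr e2, Nat.card_sigma]
  rfl

/-- `x` if `x ∣ r`, else `0`. -/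
def fdvd (r x : ℕ) : ℤ := if x ∣ r then (x : ℤ) else 0

/-- Words with `k` ones. -/
noncomputable def Wfin (n k : ℕ) [NeZero n] : Finset (ZMod n → Bool) := by
  classical
  exact Finset.univ.filter (fun w => onesCount n w = k)

lemma mem_Wfin (n k : ℕ) [NeZero n] (w : ZMod n → Bool) : w ∈ Wfin n k ↔ onesCount n w = k := by
  simp [Wfin]

lemma aux_N (n k r : ℕ) [NeZero n] :
    (n : ℤ) * NrCard n k r = ∑ w ∈ Wfin n k, fdvd r (coPeriod n w) := by
  classical
  have h := aux_burnside n k r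
  rw [mul_comm, ← Nat.cast_mul, h, Nat.cast_sum]
  unfold fdvd
  rw [← Finset.sum_filter]
  symm
  apply Finset.sum_subtype
  intro w
  rw [Finset.mem_filter, mem_Wfin]

lemma aux_S' (n k r : ℕ) [NeZero n] (hr : r < n) :
    (n : ℂ) * SbarCard n k r = ∑ w ∈ Wfin n k, by
      classical
      exact ∑ t ∈ Finset.univ.filter (fun t : ZMod n => t ∈ wStab n w),
        ZMod.stdAddChar (-(t * (r : ZMod n))) * (-1) ^ (k + k / addOrderOf t) := by
  classical
  rw [aux_S n k r hr]
  simp_rw [aux_E]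
  simp_rw [Finset.sum_filter]
  rw [Finset.sum_comm]
  apply Finset.sum_congr rfl
  intro t _
  rw [← Finset.sum_filter, Finset.sum_const, nsmul_eq_mul]
  have : (Nat.card {w : ZMod n → Bool // onesCount n w = k ∧ t ∈ wStab n w}) =
      ((Wfin n k).filter (fun w => t ∈ wStab n w)).card := by
    rw [Nat.card_eq_fintype_card]
    apply Fintype.card_of_subtype
    intro w
    rw [Finset.mem_filter, mem_Wfin]
  rw [this]
  ring

lemma aux_card_ker (n : ℕ) [NeZero n] (H : AddSubgroup (ZMod n)) (m : ℕ) :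
    Nat.card ↥(H ⊓ (nsmulAddMonoidHom m : ZMod n →+ ZMod n).ker) = (Nat.card H).gcd m := by
  rw [← IsAddCyclic.card_nsmulAddMonoidHom_ker]
  apply Nat.card_congr
  exact
    { toFun := fun x => ⟨⟨x.1, x.2.1⟩, Subtype.ext x.2.2⟩
      invFun := fun x => ⟨x.1.1, x.1.2, congrArg Subtype.val x.2⟩
      left_inv := fun x => rfl
      right_inv := fun x => rfl }

lemma addOrderOf_dvd_coPeriod (n : ℕ) [NeZero n] (w : ZMod n → Bool) (t : ZMod n)
    (ht : t ∈ wStab n w) : addOrderOf t ∣ coPeriod n w := by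
  have := addOrderOf_dvd_natCard (⟨t, ht⟩ : wStab n w)
  rwa [AddSubgroup.addOrderOf_mk] at this

lemma aux_Sodd (n k r : ℕ) [NeZero n] (hr : r < n) (hk : Odd k) :
    (n : ℤ) * SbarCard n k r = ∑ w ∈ Wfin n k, fdvd r (coPeriod n w) := by
  classical
  have h := aux_S' n k r hr
  have h2 : (n : ℂ) * SbarCard n k r = ((∑ w ∈ Wfin n k, fdvd r (coPeriod n w) : ℤ) : ℂ) := by
    rw [h]
    push_cast
    apply Finset.sum_congr rfl
    intro w hw
    rw [mem_Wfin] at hw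
    have hk' := coPeriod_dvd_ones n w
    rw [hw] at hk'
    have h3 := aux_subgroup_sum n r (wStab n w)
    have : ((fdvd r (coPeriod n w) : ℤ) : ℂ) =
        if Nat.card (wStab n w) ∣ r then (Nat.card (wStab n w) : ℂ) else 0 := by
      unfold fdvd
      rw [coPeriod_eq]
      split_ifs <;> simp
    rw [this, ← h3]
    apply Finset.sum_congr rfl
    intro t ht
    rw [Finset.mem_filter] at ht
    obtain ⟨c, hc⟩ := (addOrderOf_dvd_coPeriod n w t ht.2).trans hk'
    have hc' : k / addOrderOf t = c := by
      rw [hc, Nat.mul_div_cancel_left _ (addOrderOf_pos t)]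
    have : Odd c := by
      rw [hc] at hk
      exact (Nat.odd_mul.1 hk).2
    rw [hc', (hk.add_odd this).neg_one_pow, mul_one]
  exact_mod_cast h2

lemma aux_Seven (n k r : ℕ) [NeZero n] (hr : r < n) (hk : Even k) :
    (n : ℤ) * SbarCard n k r = ∑ w ∈ Wfin n k,
      (2 * fdvd r ((coPeriod n w).gcd (k / 2)) - fdvd r (coPeriod n w)) := by
  classical
  have h := aux_S' n k r hr
  have h2 : (n : ℂ) * SbarCard n k r = ((∑ w ∈ Wfin n k,
      (2 * fdvd r ((coPeriod n w).gcd (k / 2)) - fdvd r (coPeriod n w)) : ℤ) : ℂ) := by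
    rw [h]
    push_cast
    apply Finset.sum_congr rfl
    intro w hw
    rw [mem_Wfin] at hw
    have hk' := coPeriod_dvd_ones n w
    rw [hw] at hk'
    have h3 := aux_subgroup_sum n r (wStab n w)
    have h4 := aux_subgroup_sum n r (wStab n w ⊓ (nsmulAddMonoidHom (k / 2) : ZMod n →+ ZMod n).ker)
    have e3 : ((fdvd r (coPeriod n w) : ℤ) : ℂ) =
        if Nat.card (wStab n w) ∣ r then (Nat.card (wStab n w) : ℂ) else 0 := by
      unfold fdvd
      rw [coPeriod_eq]
      split_ifs <;> simp
    rw [aux_card_ker] at h4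
    have e4 : ((fdvd r ((coPeriod n w).gcd (k / 2)) : ℤ) : ℂ) =
        if (Nat.card (wStab n w)).gcd (k / 2) ∣ r then
          ((Nat.card (wStab n w)).gcd (k / 2) : ℂ) else 0 := by
      unfold fdvd
      rw [coPeriod_eq]
      split_ifs <;> simp
    rw [e3, e4, ← h3, ← h4]
    have hs : ∑ t ∈ Finset.univ.filter (fun t : ZMod n =>
          t ∈ wStab n w ⊓ (nsmulAddMonoidHom (k / 2) : ZMod n →+ ZMod n).ker),
          (ZMod.stdAddChar (-(t * (r : ZMod n))) : ℂ) =
        ∑ t ∈ Finset.univ.filter (fun t : ZMod n => t ∈ wStab n w),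
          if t ∈ (nsmulAddMonoidHom (k / 2) : ZMod n →+ ZMod n).ker then
            (ZMod.stdAddChar (-(t * (r : ZMod n))) : ℂ) else 0 := by
      rw [← Finset.sum_filter, Finset.filter_filter]
      apply Finset.sum_congr _ (fun _ _ => rfl)
      ext t
      simp only [Finset.mem_filter, AddSubgroup.mem_inf]
    rw [hs, Finset.mul_sum, ← Finset.sum_sub_distrib]
    apply Finset.sum_congr rfl
    intro t ht
    rw [Finset.mem_filter] at ht
    obtain ⟨c, hc⟩ := (addOrderOf_dvd_coPeriod n w t ht.2).trans hk'
    have hpos := addOrderOf_pos t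
    have hc' : k / addOrderOf t = c := by
      rw [hc, Nat.mul_div_cancel_left _ hpos]
    have hmem : t ∈ (nsmulAddMonoidHom (k / 2) : ZMod n →+ ZMod n).ker ↔ Even c := by
      rw [AddMonoidHom.mem_ker, nsmulAddMonoidHom_apply, ← addOrderOf_dvd_iff_nsmul_eq_zero]
      obtain ⟨l, hl⟩ := hk
      have hkl : k / 2 = l := by omega
      rw [hkl]
      constructor
      · rintro ⟨b, hb⟩
        refine ⟨b, ?_⟩
        apply Nat.eq_of_mul_eq_mul_left hpos
        rw [← hc, hl, hb]; ring
      · rintro ⟨b, hb⟩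
        refine ⟨b, ?_⟩
        rw [hb] at hc
        have : l + l = addOrderOf t * b + addOrderOf t * b := by rw [← hl, hc]; ring
        omega
    rw [hc', pow_add, hk.neg_one_pow, one_mul]
    split_ifs with hif
    · rw [(hmem.1 hif).neg_one_pow]; ring
    · have : Odd c := by
        rw [← Nat.not_even_iff_odd]; exact fun h => hif (hmem.2 h)
      rw [this.neg_one_pow]; ring
  exact_mod_cast h2


/-- Contribution of a word with co-period `h`. -/
def Gfun (r l h : ℕ) : ℤ := fdvd r h - fdvd r (h.gcd l)

lemma Gfun_struct (l h : ℕ) (h1 : h ∣ 2 * l) (h2 : ¬ h ∣ l) :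
    ∃ m q, h = 2 * m ∧ l = m * q ∧ Odd q ∧ h.gcd l = m := by
  obtain ⟨q, hq⟩ := h1
  have hqo : Odd q := by
    rw [← Nat.not_even_iff_odd]
    rintro ⟨c, hc⟩
    apply h2
    refine ⟨c, ?_⟩
    rw [hc, mul_add] at hq
    omega
  have hev : Even h := by
    have : Even (h * q) := by rw [← hq]; exact even_two_mul l
    rcases Nat.even_mul.1 this with h | h
    · exact h
    · exact absurd hqo (Nat.not_odd_iff_even.2 h)
  obtain ⟨m, hm⟩ := hev
  have hm2 : h = m * 2 := by omega
  have hlq : l = m * q := by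
    have : 2 * l = 2 * (m * q) := by rw [hq, hm2]; ring
    omega
  refine ⟨m, q, by omega, hlq, hqo, ?_⟩
  rw [hm2, hlq, Nat.gcd_mul_left, (Nat.coprime_two_left.2 hqo : Nat.gcd 2 q = 1), mul_one]

lemma Gfun_eq_zero (r l h : ℕ) (h2 : h ∣ l) : Gfun r l h = 0 := by
  unfold Gfun
  rw [Nat.gcd_eq_left h2, sub_self]

lemma Gfun_ne_zero (r l h : ℕ) (h1 : h ∣ 2 * l) (hne : Gfun r l h ≠ 0) :
    ∃ m q, h = 2 * m ∧ l = m * q ∧ Odd q ∧ m ∣ r := by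
  have h2 : ¬ h ∣ l := fun h2 => hne (Gfun_eq_zero r l h h2)
  obtain ⟨m, q, hm, hq, hqo, hg⟩ := Gfun_struct l h h1 h2
  refine ⟨m, q, hm, hq, hqo, ?_⟩
  by_contra hmr
  apply hne
  have hhr : ¬ h ∣ r := fun hh => hmr ((Dvd.intro_left 2 hm.symm).trans hh)
  unfold Gfun fdvd
  rw [hg, if_neg hmr, if_neg hhr, sub_self]

lemma Gfun_ne (r l h : ℕ) (h1 : h ∣ 2 * l) (h2 : ¬ h ∣ l) (h3 : ∀ m, h = 2 * m → m ∣ r) :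
    Gfun r l h ≠ 0 := by
  obtain ⟨m, q, hm, hq, hqo, hg⟩ := Gfun_struct l h h1 h2
  have hmr := h3 m hm
  have hm0 : m ≠ 0 := by
    rintro rfl
    apply h2
    rw [hq, zero_mul]
    exact dvd_zero _
  unfold Gfun fdvd
  rw [hg, if_pos hmr]
  split_ifs <;> omega

lemma Gfun_nonneg (r l h a : ℕ) (hl : l ≠ 0) (ha : a = padicValNat 2 (2 * l)) (h1 : h ∣ 2 * l)
    (hr : 2 ^ a ∣ r) : 0 ≤ Gfun r l h := by
  by_cases hne : Gfun r l h = 0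
  · rw [hne]
  have h2 : ¬ h ∣ l := fun h2 => hne (Gfun_eq_zero r l h h2)
  obtain ⟨m, q, hm, hq, hqo, hg⟩ := Gfun_struct l h h1 h2
  unfold Gfun fdvd
  rw [hg]
  by_cases hmr : m ∣ r
  · have hhr : h ∣ r := by
      obtain ⟨s, hs⟩ := hmr
      rcases Nat.even_or_odd s with ⟨c, hc⟩ | hso
      · exact ⟨c, by rw [hs, hc, hm]; ring⟩
      · exfalso
        rw [hs] at hr
        have h3 : 2 ^ a ∣ m := Nat.Coprime.dvd_of_dvd_mul_right (Nat.Coprime.pow_left a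
          ((Nat.coprime_two_left).2 hso)) hr
        have h4 : 2 ^ (a + 1) ∣ 2 * l := by
          refine Dvd.dvd.trans ?_ h1
          rw [hm, pow_succ, mul_comm]
          exact Nat.mul_dvd_mul_left 2 h3
        rw [padicValNat_dvd_iff_le (by omega)] at h4
        omega
    rw [if_pos hmr, if_pos hhr]
    omega
  · rw [if_neg hmr]
    split_ifs <;> omega

lemma Gfun_nonpos (r l h a : ℕ) (ha : 2 ^ a ∣ 2 * l) (h1 : h ∣ 2 * l)
    (hr : ¬ 2 ^ a ∣ r) : Gfun r l h ≤ 0 := by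
  by_cases hne : Gfun r l h = 0
  · rw [hne]
  have h2 : ¬ h ∣ l := fun h2 => hne (Gfun_eq_zero r l h h2)
  obtain ⟨m, q, hm, hq, hqo, hg⟩ := Gfun_struct l h h1 h2
  have h3 : 2 ^ a ∣ h := by
    have : 2 * l = h * q := by rw [hm, hq]; ring
    rw [this] at ha
    exact Nat.Coprime.dvd_of_dvd_mul_right (Nat.Coprime.pow_left a
          ((Nat.coprime_two_left).2 hqo)) ha
  unfold Gfun fdvd
  rw [hg, if_neg (fun hh => hr (h3.trans hh))]
  split_ifs <;> omega

lemma aux_card_lt (N K : ℕ) [NeZero N] (hKN : K < N) :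
    Nat.card {x : ZMod N // x.val < K} = K := by
  have e : {x : ZMod N // x.val < K} ≃ Fin K :=
    { toFun := fun x => ⟨x.1.val, x.2⟩
      invFun := fun i => ⟨(i.1 : ZMod N), by
        rw [ZMod.val_natCast_of_lt (i.2.trans hKN)]; exact i.2⟩
      left_inv := fun x => by simp
      right_inv := fun i => by
        ext
        simp [ZMod.val_natCast_of_lt (i.2.trans hKN)] }
  rw [Nat.card_congr e, Nat.card_fin]

lemma aux_witness (n c N K : ℕ) [NeZero n] (hn : n = c * N) (hK : 0 < K) (hKN : K < N) :
    ∃ w : ZMod n → Bool, onesCount n w = c * K ∧ coPeriod n w = c := by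
  have : NeZero N := ⟨by omega⟩
  have hNn : N ∣ n := ⟨c, by rw [hn, mul_comm]⟩
  let φ : ZMod n →+ ZMod N := (ZMod.castHom hNn (ZMod N)).toAddMonoidHom
  have hφ : Function.Surjective φ := ZMod.castHom_surjective hNn
  let e := QuotientAddGroup.quotientKerEquivOfSurjective φ hφ
  have hker : Nat.card φ.ker = c := by
    have h := AddSubgroup.card_eq_card_quotient_mul_card_addSubgroup φ.ker
    rw [Nat.card_congr e.toEquiv, Nat.card_zmod, Nat.card_zmod] at h
    have h' : N * Nat.card φ.ker = N * c := by rw [← h, mul_comm N c]; exact hn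
    exact Nat.eq_of_mul_eq_mul_left (by omega) h'
  refine ⟨fun i => decide ((φ i).val < K), ?_, ?_⟩
  · rw [aux_card_preimage n φ.ker (e ⁻¹' {x | x.val < K})]
    · rw [hker]
      congr 1
      refine Eq.trans ?_ (aux_card_lt N K hKN)
      exact Nat.card_congr (e.toEquiv.subtypeEquiv (fun x => Iff.rfl))
    · intro i
      rw [decide_eq_true_iff]
      rfl
  · rw [coPeriod_eq, ← hker]
    congr 2
    have : wStab n (fun i => decide ((φ i).val < K)) = φ.ker := by
      ext t
      rw [mem_wStab, AddMonoidHom.mem_ker]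
      simp only [decide_eq_decide, map_add]
      constructor
      · intro h
        have h' : ∀ x : ZMod N, (x + φ t).val < K ↔ x.val < K := by
          intro x
          obtain ⟨i, rfl⟩ := hφ x
          exact h i
        by_contra hne
        have h1 := (h' 0).2 (by rw [ZMod.val_zero]; exact hK)
        rw [zero_add] at h1
        have hpos : 0 < (φ t).val := by
          rw [Nat.pos_iff_ne_zero, Ne, ZMod.val_eq_zero]; exact hne
        have h2 : -1 + φ t = (((φ t).val - 1 : ℕ) : ZMod N) := by
          rw [Nat.cast_sub hpos, ZMod.natCast_zmod_val]
          push_cast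
          ring
        have h3 := (h' (-1)).1 (by
          rw [h2, ZMod.val_natCast_of_lt (by omega)]; omega)
        have h4 : (-1 : ZMod N) = ((N - 1 : ℕ) : ZMod N) := by
          rw [Nat.cast_sub (by omega)]
          simp
        rw [h4, ZMod.val_natCast_of_lt (by omega)] at h3
        omega
      · intro h i
        rw [h, add_zero]
    rw [this]

/-- Characterization of when `|S̄ᵣ(n,k)| = |Nᵣ(n,k)|`. -/
theorem Sbar_eq_Nr_iff (n k r : ℕ) (hk : k ≤ n) (hr : r < n) :
    SbarCard n k r = NrCard n k r ↔
      (Odd n ∨ Odd k ∨ (k = 0 ∨ padicValNat 2 n < padicValNat 2 k) ∨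
        (r ≠ 0 ∧ padicValNat 2 r + 2 ≤ padicValNat 2 k) ∨
        (k = n ∧ Even n ∧ r ≠ 0 ∧ r ≠ n / 2)) := by
  have : NeZero n := ⟨by omega⟩
  rcases Nat.even_or_odd k with hkE | hkO
  swap
  · refine iff_of_true ?_ (Or.inr (Or.inl hkO))
    have h := (aux_Sodd n k r hr hkO).trans (aux_N n k r).symm
    have hn : (n : ℤ) ≠ 0 := by exact_mod_cast NeZero.ne n
    exact_mod_cast mul_left_cancel₀ hn h
  obtain ⟨l, hl⟩ := hkE
  have hl2 : k = 2 * l := by omega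
  have hl' : k / 2 = l := by omega
  have key : SbarCard n k r = NrCard n k r ↔
      ∑ w ∈ Wfin n k, Gfun r l (coPeriod n w) = 0 := by
    have hn : (n : ℤ) ≠ 0 := by exact_mod_cast NeZero.ne n
    have hS := aux_Seven n k r hr ⟨l, hl⟩
    have hN := aux_N n k r
    rw [hl'] at hS
    have hdiff : (n : ℤ) * NrCard n k r - n * SbarCard n k r =
        2 * ∑ w ∈ Wfin n k, Gfun r l (coPeriod n w) := by
      rw [hS, hN, ← Finset.sum_sub_distrib, Finset.mul_sum]
      apply Finset.sum_congr rfl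
      intro w _
      unfold Gfun
      ring
    constructor
    · intro h
      rw [h, sub_self] at hdiff
      omega
    · intro h
      rw [h, mul_zero, sub_eq_zero] at hdiff
      exact_mod_cast (mul_left_cancel₀ hn hdiff).symm
  rw [key]
  have hW : ∀ w ∈ Wfin n k, coPeriod n w ∣ 2 * l ∧ coPeriod n w ∣ n := by
    intro w hw
    rw [mem_Wfin] at hw
    refine ⟨?_, ?_⟩
    · rw [← hl2, ← hw]; exact coPeriod_dvd_ones n w
    · have := AddSubgroup.card_addSubgroup_dvd_card (wStab n w)
      rwa [Nat.card_zmod] at this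
  constructor
  ·
    intro hsum
    by_contra hcon
    push Not at hcon
    obtain ⟨hn1, hk1, ⟨hk0, hkn⟩, hd, he⟩ := hcon
    have hl0 : l ≠ 0 := by omega
    have ha : 2 ^ padicValNat 2 k ∣ k := pow_padicValNat_dvd
    have hdr : ∀ m, 2 ^ (m + 1) ∣ k → 2 ^ m ∣ r := by
      intro m hm
      rcases eq_or_ne r 0 with rfl | hr0
      · exact dvd_zero _
      rw [padicValNat_dvd_iff_le hr0]
      rw [padicValNat_dvd_iff_le hk0] at hm
      have := hd hr0
      omega
    have hall : ∀ w ∈ Wfin n k, Gfun r l (coPeriod n w) = 0 := by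
      by_cases h2r : 2 ^ padicValNat 2 k ∣ r
      · rw [Finset.sum_eq_zero_iff_of_nonneg] at hsum
        · exact hsum
        · intro w hw
          exact Gfun_nonneg r l _ (padicValNat 2 k) hl0 (by rw [hl2]) (hW w hw).1 h2r
      · rw [Finset.sum_eq_zero_iff_of_nonpos] at hsum
        · exact hsum
        · intro w hw
          exact Gfun_nonpos r l _ (padicValNat 2 k) (by rw [hl2]; rw [← hl2]; exact ha) (hW w hw).1 h2r
    rcases eq_or_lt_of_le hk with hkn' | hkn'
    ·
      have hev : Even n := Nat.not_odd_iff_even.1 hn1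
      have hw1 : onesCount n (fun _ => true) = k := by
        unfold onesCount
        rw [hkn']
        simp
      have hc1 : coPeriod n (fun _ => true) = n := by
        unfold coPeriod
        simp
      have h0 := hall _ ((mem_Wfin n k _).2 hw1)
      rw [hc1] at h0
      refine Gfun_ne r l n ?_ ?_ ?_ h0
      · rw [← hl2, hkn']
      · intro hdv
        have := Nat.le_of_dvd (by omega) hdv
        omega
      · intro m hm
        rcases eq_or_ne r 0 with rfl | hr0
        · exact dvd_zero _
        · rw [he hkn' hev hr0]
          exact ⟨1, by omega⟩
    ·
      have hle : 2 ^ padicValNat 2 k ∣ n := by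
        rw [padicValNat_dvd_iff_le (NeZero.ne n)]; exact hkn
      obtain ⟨N, hN⟩ := hle
      obtain ⟨K, hK⟩ := ha
      have hcpos : 0 < 2 ^ padicValNat 2 k := by positivity
      have hKpos : 0 < K := by
        rcases Nat.eq_zero_or_pos K with h | h
        · rw [h, mul_zero] at hK; omega
        · exact h
      have hKN : K < N := by
        rw [hN, hK] at hkn'
        have := hkn'
        rw [← hK] at this
        exact lt_of_mul_lt_mul_left (by rw [← hN, ← hK]; omega : 2 ^ padicValNat 2 k * K < 2 ^ padicValNat 2 k * N) (Nat.zero_le _)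
      obtain ⟨w, hw1, hw2⟩ := aux_witness n (2 ^ padicValNat 2 k) N K hN hKpos hKN
      have h0 := hall w ((mem_Wfin n k _).2 (by rw [hw1]; exact hK.symm))
      rw [hw2] at h0
      refine Gfun_ne r l _ ?_ ?_ ?_ h0
      · rw [← hl2]; exact ⟨K, hK⟩
      · intro hdv
        have h3 : 2 ^ (padicValNat 2 k + 1) ∣ k := by
          rw [pow_succ, mul_comm]
          conv_rhs => rw [hl2]
          exact Nat.mul_dvd_mul_left 2 hdv
        rw [padicValNat_dvd_iff_le hk0] at h3
        omega
      · intro m hm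
        rcases Nat.eq_zero_or_pos (padicValNat 2 k) with h | h
        · rw [h] at hm; omega
        · obtain ⟨b, hb⟩ := Nat.exists_eq_succ_of_ne_zero h.ne'
          have hm' : m = 2 ^ b := by
            rw [hb, Nat.succ_eq_add_one, pow_succ] at hm; omega
          rw [hm']
          apply hdr
          rw [← Nat.succ_eq_add_one, ← hb]
          exact ⟨K, hK⟩
  ·
    intro hcond
    apply Finset.sum_eq_zero
    intro w hw
    by_contra hne
    obtain ⟨hwk, hwn⟩ := hW w hw
    obtain ⟨m, q, hm, hq, hqo, hmr⟩ := Gfun_ne_zero r l _ hwk hne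
    have hcop : ∀ b, 2 ^ b ∣ k → 2 ^ b ∣ coPeriod n w := by
      intro b hb
      have : k = coPeriod n w * q := by rw [hl2, hm, hq]; ring
      rw [this] at hb
      exact Nat.Coprime.dvd_of_dvd_mul_right (Nat.Coprime.pow_left b
        ((Nat.coprime_two_left).2 hqo)) hb
    rcases hcond with h | h | (h | h) | ⟨h1, h2⟩ | ⟨h1, h2, h3, h4⟩
    · have : 2 ∣ n := (Dvd.intro m hm.symm).trans hwn
      exact (Nat.not_even_iff_odd.2 h) (even_iff_two_dvd.2 this)
    · exact (Nat.not_even_iff_odd.2 h) ⟨l, hl⟩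
    · have : l = 0 := by omega
      apply hne
      rw [this]
      simp [Gfun]
    · have h1 := (hcop _ pow_padicValNat_dvd).trans hwn
      rw [padicValNat_dvd_iff_le (NeZero.ne n)] at h1
      omega
    · obtain ⟨b, hb⟩ : ∃ b, padicValNat 2 k = b + 1 := ⟨padicValNat 2 k - 1, by omega⟩
      have h3 := hcop _ pow_padicValNat_dvd
      rw [hb, hm, pow_succ, mul_comm] at h3
      have h4 : 2 ^ b ∣ m := Nat.dvd_of_mul_dvd_mul_left (by norm_num) h3
      have h5 := h4.trans hmr
      rw [padicValNat_dvd_iff_le h1] at h5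
      omega
    · have hcn : coPeriod n w = n := by
        rw [mem_Wfin, h1] at hw
        have htrue : ∀ i, w i = true := by
          unfold onesCount at hw
          intro i
          by_contra hi
          have hlt := Fintype.card_subtype_lt (p := fun i => w i = true) hi
          rw [← Nat.card_eq_fintype_card, hw, ZMod.card] at hlt
          omega
        unfold coPeriod
        simp [htrue]
      rw [hcn] at hm
      obtain ⟨s, hs⟩ := hmr
      have hs2 : s < 2 := by
        by_contra hs2
        have : m * 2 ≤ m * s := Nat.mul_le_mul_left m (by omega)
        omega
      interval_cases s
      · omega
      · omega
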